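/- Let r, k be positive integers with r ≥ k - 1 and r ≡ k + 1 (mod 2), and let n ∈ ℕ. Let M be the (n+1)×(n+1) symmetric integer tridiagonal matrix with M i i = -2 for 0 ≤ i ≤ n-1, M n n = -(k+1), M i (i+1) = M (i+1) i = 1 for 0 ≤ i ≤ n-1, and all other entries 0; let p i = 0 for i < n and p n = (r - k + 1)/2, and set c i = 2·(p i) - 2 - M i i (so c i = 0 for i < n and c n = r). Then M is negative definite and -cᵀ M⁻¹ c = r² / (k + 1 - n/(n+1)). -/

import Mathlib

open Matrix

/-- The intersection matrix of a chain of `n` curves of self-intersection `-2` followed by a curve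
of self-intersection `-(a + 1)`. -/
def chainMatrix {R : Type*} [Ring R] (n : ℕ) (a : R) : Matrix (Fin (n + 1)) (Fin (n + 1)) R :=
  fun i j =>
    if i = j then (if (i : ℕ) = n then -(a + 1) else -2)
    else if (i : ℕ) + 1 = (j : ℕ) ∨ (j : ℕ) + 1 = (i : ℕ) then 1 else 0

section Ring

variable {R : Type*} [Ring R] (n : ℕ) (a : R)

lemma chainMatrix_castSucc_castSucc (i j : Fin (n + 1)) :
    chainMatrix (n + 1) a i.castSucc j.castSucc = chainMatrix n 1 i j := by
  have hi : (i : ℕ) ≠ n + 1 := by omega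
  simp only [chainMatrix, Fin.castSucc_inj, Fin.val_castSucc, if_neg hi]
  norm_num

lemma chainMatrix_castSucc_last (i : Fin (n + 1)) :
    chainMatrix (n + 1) a i.castSucc (Fin.last (n + 1)) = if i = Fin.last n then 1 else 0 := by
  have hi : i.castSucc ≠ Fin.last (n + 1) := i.castSucc_ne_last
  have h : ((i : ℕ) + 1 = n + 1 ∨ n + 1 + 1 = (i : ℕ)) ↔ i = Fin.last n := by
    rw [Fin.ext_iff, Fin.val_last]; omega
  simp only [chainMatrix, if_neg hi, Fin.val_castSucc, Fin.val_last, h]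

lemma chainMatrix_last_castSucc (j : Fin (n + 1)) :
    chainMatrix (n + 1) a (Fin.last (n + 1)) j.castSucc = if j = Fin.last n then 1 else 0 := by
  have hj : Fin.last (n + 1) ≠ j.castSucc := j.castSucc_ne_last.symm
  have h : (n + 1 + 1 = (j : ℕ) ∨ (j : ℕ) + 1 = n + 1) ↔ j = Fin.last n := by
    rw [Fin.ext_iff, Fin.val_last]; omega
  simp only [chainMatrix, if_neg hj, Fin.val_castSucc, Fin.val_last, h]

lemma chainMatrix_last_last :
    chainMatrix n a (Fin.last n) (Fin.last n) = -(a + 1) := by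
  simp [chainMatrix]

lemma chainMatrix_mulVec_castSucc (x : Fin (n + 2) → R) (i : Fin (n + 1)) :
    (chainMatrix (n + 1) a *ᵥ x) i.castSucc =
      (chainMatrix n 1 *ᵥ fun j => x j.castSucc) i +
        if i = Fin.last n then x (Fin.last (n + 1)) else 0 := by
  simp [mulVec, dotProduct, Fin.sum_univ_castSucc (n := n + 1), chainMatrix_castSucc_castSucc,
    chainMatrix_castSucc_last]

lemma chainMatrix_mulVec_last (x : Fin (n + 2) → R) :
    (chainMatrix (n + 1) a *ᵥ x) (Fin.last (n + 1)) =
      x (Fin.last n).castSucc - (a + 1) * x (Fin.last (n + 1)) := by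
  simp only [mulVec, dotProduct, Fin.sum_univ_castSucc (n := n + 1), chainMatrix_last_castSucc,
    chainMatrix_last_last]
  simp [sub_eq_add_neg, -neg_add_rev]

/-- The vector `(1, 2, …, n + 1)` is, up to a scalar, the last column of the inverse of the chain
matrix. -/
lemma chainMatrix_mulVec_val_add_one :
    chainMatrix n a *ᵥ (fun i => ((i : ℕ) : R) + 1) =
      Pi.single (Fin.last n) (-(a * (n + 1) + 1)) := by
  induction n generalizing a with
  | zero =>
    ext i
    fin_cases i
    simp [mulVec, dotProduct, chainMatrix]
  | succ n ih =>
    ext i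
    refine Fin.lastCases ?_ (fun i => ?_) i
    · rw [chainMatrix_mulVec_last, Pi.single_eq_same]
      simp only [Fin.val_castSucc, Fin.val_last]
      push_cast
      noncomm_ring
    · rw [chainMatrix_mulVec_castSucc, Pi.single_eq_of_ne i.castSucc_ne_last]
      simp only [Fin.val_castSucc, ih]
      rcases eq_or_ne i (Fin.last n) with rfl | h
      · simp only [Pi.single_eq_same, if_true, Fin.val_last]
        push_cast
        noncomm_ring
      · simp [h]

lemma map_intCast_chainMatrix (a : ℤ) :
    (chainMatrix n a).map (Int.cast : ℤ → R) = chainMatrix n (a : R) := by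
  ext i j
  simp only [chainMatrix, map_apply]
  split_ifs <;> simp

end Ring

section Field

variable {K : Type*} [Field K] [LinearOrder K] [IsStrictOrderedRing K] (n : ℕ)

lemma dotProduct_chainMatrix_mulVec_lt (a : K) {x : Fin (n + 1) → K} (hx : x ≠ 0) :
    x ⬝ᵥ (chainMatrix n a *ᵥ x) < -(a * x (Fin.last n) ^ 2) := by
  induction n generalizing a with
  | zero =>
    have h0 : x 0 ≠ 0 := fun h => hx <| by ext i; fin_cases i; exact h
    have := sq_pos_of_ne_zero h0
    simp [mulVec, dotProduct, chainMatrix]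
    nlinarith
  | succ n ih =>
    set y : Fin (n + 1) → K := fun j => x j.castSucc with hy
    have hQ : x ⬝ᵥ (chainMatrix (n + 1) a *ᵥ x) =
        y ⬝ᵥ (chainMatrix n 1 *ᵥ y) + 2 * y (Fin.last n) * x (Fin.last (n + 1)) -
          (a + 1) * x (Fin.last (n + 1)) ^ 2 := by
      rw [dotProduct, Fin.sum_univ_castSucc]
      simp only [chainMatrix_mulVec_castSucc, chainMatrix_mulVec_last, mul_add,
        Finset.sum_add_distrib, dotProduct, hy]
      simp
      ring
    rw [hQ]
    by_cases h : y = 0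
    · have hl : x (Fin.last (n + 1)) ≠ 0 := fun hl => hx <| by
        ext i
        exact Fin.lastCases hl (fun j => congrFun h j) i
      have := sq_pos_of_ne_zero hl
      simp [h]
      linarith
    · have := ih 1 h
      nlinarith [sq_nonneg (y (Fin.last n) - x (Fin.last (n + 1)))]

lemma dotProduct_chainMatrix_mulVec_neg {a : K} (ha : 0 ≤ a) {x : Fin (n + 1) → K} (hx : x ≠ 0) :
    x ⬝ᵥ (chainMatrix n a *ᵥ x) < 0 :=
  (dotProduct_chainMatrix_mulVec_lt n a hx).trans_le <| neg_nonpos.2 <| by positivity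

lemma isUnit_det_chainMatrix {a : K} (ha : 0 ≤ a) : IsUnit (chainMatrix n a).det := by
  rw [isUnit_iff_ne_zero]
  intro h
  obtain ⟨v, hv, hv0⟩ := exists_mulVec_eq_zero_iff.2 h
  simpa [hv0] using dotProduct_chainMatrix_mulVec_neg n ha hv

lemma chainMatrix_inv_mulVec_single_last {a : K} (ha : 0 ≤ a) (s : K) :
    (chainMatrix n a)⁻¹ *ᵥ Pi.single (Fin.last n) s =
      (-s / (a * (n + 1) + 1)) • fun i : Fin (n + 1) => ((i : ℕ) : K) + 1 := by
  have hD : a * (n + 1) + 1 ≠ 0 := by positivity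
  have h : Pi.single (Fin.last n) s =
      chainMatrix n a *ᵥ ((-s / (a * (n + 1) + 1)) • fun i : Fin (n + 1) => ((i : ℕ) : K) + 1) := by
    rw [mulVec_smul, chainMatrix_mulVec_val_add_one, ← Pi.single_smul, smul_eq_mul]
    congr 1
    field_simp
  rw [h, mulVec_mulVec, nonsing_inv_mul _ (isUnit_det_chainMatrix n ha), one_mulVec]

end Field

/-- **Proposition 2.5, case `r - k` odd (explicit computation).** For the chain of `n` rational
`(-2)`-curves attached to a curve of genus `(r-k+1)/2` with self-intersection `-(k+1)`, the
intersection matrix is negative definite and `-cᵀ M⁻¹ c = r²/(k + 1 - n/(n+1))`. -/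
theorem negK2_chain_with_tail (r k : ℕ) (hr : 0 < r) (hk : 0 < k)
    (hrk : k - 1 ≤ r) (hpar : r % 2 = (k + 1) % 2) (n : ℕ)
    (M : Matrix (Fin (n + 1)) (Fin (n + 1)) ℤ)
    (hM : M = fun i j : Fin (n + 1) =>
      if i = j then (if (i : ℕ) = n then -((k : ℤ) + 1) else -2)
      else if (i : ℕ) + 1 = (j : ℕ) ∨ (j : ℕ) + 1 = (i : ℕ) then 1 else 0)
    (p : Fin (n + 1) → ℕ)
    (hp : p = fun i : Fin (n + 1) => if (i : ℕ) = n then (r - k + 1) / 2 else 0)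
    (c : Fin (n + 1) → ℚ)
    (hc : c = fun i : Fin (n + 1) => 2 * (p i : ℚ) - 2 - (M i i : ℚ)) :
    (∀ x : Fin (n + 1) → ℝ, x ≠ 0 → x ⬝ᵥ ((M.map (Int.cast : ℤ → ℝ)) *ᵥ x) < 0) ∧
    - (c ⬝ᵥ ((M.map (Int.cast : ℤ → ℚ))⁻¹ *ᵥ c)) =
      (r : ℚ) ^ 2 / ((k : ℚ) + 1 - (n : ℚ) / ((n : ℚ) + 1)) := by
  have hM' : M = chainMatrix n (k : ℤ) := hM
  have hcs : c = Pi.single (Fin.last n) (r : ℚ) := by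
    ext i
    rcases eq_or_ne i (Fin.last n) with rfl | h
    · have h2 : 2 * ((r - k + 1) / 2) + k = r + 1 := by omega
      have h3 : 2 * (((r - k + 1) / 2 : ℕ) : ℚ) + k = r + 1 := by exact_mod_cast h2
      simp only [hc, hp, hM, Fin.val_last, if_true, Pi.single_eq_same]
      push_cast at h3 ⊢
      linarith
    · have hi : (i : ℕ) ≠ n := fun hi => h (Fin.ext hi)
      simp [hc, hp, hM, hi, h]
  rw [hM', map_intCast_chainMatrix, map_intCast_chainMatrix, hcs]
  simp only [Int.cast_natCast]
  refine ⟨fun x hx => dotProduct_chainMatrix_mulVec_neg n k.cast_nonneg hx, ?_⟩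
  rw [chainMatrix_inv_mulVec_single_last n k.cast_nonneg, single_dotProduct, Pi.smul_apply,
    Fin.val_last, smul_eq_mul]
  have hD : (k : ℚ) * (n + 1) + 1 ≠ 0 := by positivity
  have hE : (k : ℚ) + 1 - n / (n + 1) = (k * (n + 1) + 1) / (n + 1) := by
    field_simp
    ring
  rw [hE]
  field_simp
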